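/- Every pairwise-stable matching in G is a popular matching in G. -/

import Mathlib

/-!
Many-to-many matchings with two-sided preferences, votes, and popularity,
following "Popular Matchings in the Many-to-Many Setting".
-/

/-- The vote of a vertex with rank function `r` (smaller rank = more preferred)
comparing two options, where `none` stands for `null` (ranked below everything). -/
def vote {β : Type*} [DecidableEq β] (r : β → ℕ) : Option β → Option β → ℤ
  | none, none => 0
  | some _, none => 1
  | none, some _ => -1
  | some x, some y => if x = y then 0 else if r x < r y then 1 else -1

/-- The common length `k` of the arrays compared in `δ_u(S₀,S₁)`:
after padding the smaller of `S₀, S₁` with nulls and removing common elements. -/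
def kOf {β : Type*} [DecidableEq β] (S₀ S₁ : Finset β) : ℕ :=
  max S₀.card S₁.card - (S₀ ∩ S₁).card

/-- `S₀ ∖ S₁`, viewed as an array of `Option`s padded with `none` (null) to length `k`. -/
noncomputable def padded {β : Type*} [DecidableEq β] (S₀ S₁ : Finset β) (k : ℕ) : List (Option β) :=
  ((S₀ \ S₁).toList.map some) ++ List.replicate (k - (S₀ \ S₁).card) none

/-- `δ_u(S₀,S₁)`: the minimum, over all permutations `σ` of `{1,…,k}`, of
`Σ_i vote_u(S'₀[i], S'₁[σ(i)])`. -/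
noncomputable def deltaSet {β : Type*} [DecidableEq β] (r : β → ℕ) (S₀ S₁ : Finset β) : ℤ :=
  Finset.univ.inf' ⟨1, Finset.mem_univ 1⟩ fun σ : Equiv.Perm (Fin (kOf S₀ S₁)) =>
    ∑ i : Fin (kOf S₀ S₁),
      vote r ((padded S₀ S₁ (kOf S₀ S₁)).getD (i : ℕ) none)
             ((padded S₁ S₀ (kOf S₀ S₁)).getD (σ i : ℕ) none)

/-- A bipartite instance `G = (A ∪ B, E)` with capacities `≥ 1` and strict
preferences of every vertex over its neighbors (given by injective-on-neighbors
rank functions; smaller rank = more preferred). -/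
structure PrefInstance (α β : Type*) [Fintype α] [Fintype β] [DecidableEq α] [DecidableEq β] where
  E : Finset (α × β)
  capA : α → ℕ
  capB : β → ℕ
  rankA : α → β → ℕ
  rankB : β → α → ℕ
  capA_pos : ∀ a, 1 ≤ capA a
  capB_pos : ∀ b, 1 ≤ capB b
  rankA_injOn : ∀ a, Set.InjOn (rankA a) {b | (a, b) ∈ E}
  rankB_injOn : ∀ b, Set.InjOn (rankB b) {a | (a, b) ∈ E}

namespace PrefInstance

variable {α β : Type*} [Fintype α] [Fintype β] [DecidableEq α] [DecidableEq β]

/-- `M(a)`: the set of `B`-vertices matched to `a` in `M`. -/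
def rowSet (M : Finset (α × β)) (a : α) : Finset β :=
  Finset.univ.filter fun b => (a, b) ∈ M

/-- `M(b)`: the set of `A`-vertices matched to `b` in `M`. -/
def colSet (M : Finset (α × β)) (b : β) : Finset α :=
  Finset.univ.filter fun a => (a, b) ∈ M

variable (I : PrefInstance α β)

/-- `M` is a matching in `G`: a subset of `E` respecting all capacities. -/
def IsMatching (M : Finset (α × β)) : Prop :=
  M ⊆ I.E ∧ (∀ a, (rowSet M a).card ≤ I.capA a) ∧ (∀ b, (colSet M b).card ≤ I.capB b)

/-- `Δ_a(M₀,M₁) = δ_a(M₀(a), M₁(a))` for `a ∈ A`. -/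
noncomputable def DeltaA (M₀ M₁ : Finset (α × β)) (a : α) : ℤ :=
  deltaSet (I.rankA a) (rowSet M₀ a) (rowSet M₁ a)

/-- `Δ_b(M₀,M₁) = δ_b(M₀(b), M₁(b))` for `b ∈ B`. -/
noncomputable def DeltaB (M₀ M₁ : Finset (α × β)) (b : β) : ℤ :=
  deltaSet (I.rankB b) (colSet M₀ b) (colSet M₁ b)

/-- `Δ(M₀,M₁) = Σ_{u ∈ A∪B} Δ_u(M₀,M₁)`. -/
noncomputable def Delta (M₀ M₁ : Finset (α × β)) : ℤ :=
  (∑ a, I.DeltaA M₀ M₁ a) + ∑ b, I.DeltaB M₀ M₁ b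

/-- `M` is a popular matching: `Δ(M,T) ≥ 0` against every matching `T`. -/
def Popular (M : Finset (α × β)) : Prop :=
  I.IsMatching M ∧ ∀ T, I.IsMatching T → 0 ≤ I.Delta M T

/-- `M` is a weakly popular matching: `Δ(T,M) ≤ 0` for every matching `T`. -/
def WeaklyPopular (M : Finset (α × β)) : Prop :=
  I.IsMatching M ∧ ∀ T, I.IsMatching T → I.Delta T M ≤ 0

/-- The edge `(a,b) ∈ E ∖ M` blocks `M`. -/
def Blocks (M : Finset (α × β)) (a : α) (b : β) : Prop :=
  (a, b) ∈ I.E ∧ (a, b) ∉ M ∧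
  ((rowSet M a).card < I.capA a ∨ ∃ b' ∈ rowSet M a, I.rankA a b < I.rankA a b') ∧
  ((colSet M b).card < I.capB b ∨ ∃ a' ∈ colSet M b, I.rankB b a < I.rankB b a')

/-- `M` is a pairwise-stable matching: no edge blocks it. -/
def Stable (M : Finset (α × β)) : Prop :=
  I.IsMatching M ∧ ∀ a b, ¬ I.Blocks M a b

end PrefInstance

/-!
Let `S` be stable, let `T` be any matching, and suppose that the vertex `u` is asked to compare its
partners in `S` with some `v ∈ T(u) ∖ S(u)`. If `u` votes against `S`, then either `v` is opposed
to null, whence `|S(u)| < |T(u)| ≤ cap(u)`, or `v` is opposed to a partner that `u` likes less. In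
both cases `u` would welcome `v` in addition to, or instead of, a partner in `S`. So, whatever the
permutation, the votes of `u` on `v` are at least `-1` if `u` welcomes `v` and at least `1`
otherwise, while votes on the nulls of `T` never go against `S`.

Adding up over all vertices, `Δ(S, T)` is at least the sum over the edges of `T ∖ S` of the two
bounds at the endpoints, and the endpoints of such an edge do not welcome each other, since the edge
does not block `S`.
-/

section Vote

variable {β : Type*} [DecidableEq β]

lemma neg_one_le_vote (r : β → ℕ) (o o' : Option β) : -1 ≤ vote r o o' := by
  unfold vote
  split <;> (try split_ifs) <;> norm_num

lemma vote_none_right_nonneg (r : β → ℕ) (o : Option β) : 0 ≤ vote r o none := by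
  cases o <;> simp only [vote, le_refl, zero_le_one]

lemma vote_some_some_of_lt {r : β → ℕ} {x y : β} (h : r x < r y) :
    vote r (some x) (some y) = 1 := by
  have hne : x ≠ y := ne_of_apply_ne r h.ne
  simp only [vote, if_neg hne, if_pos h]

end Vote

section Padding

variable {β : Type*} [DecidableEq β]

lemma kOf_comm (S T : Finset β) : kOf S T = kOf T S := by
  rw [kOf, kOf, max_comm, Finset.inter_comm]

lemma card_sdiff_le_kOf (S T : Finset β) : (S \ T).card ≤ kOf S T := by
  have := Finset.card_sdiff_add_card_inter S T
  unfold kOf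
  omega

lemma card_lt_card_of_card_sdiff_lt_kOf {S T : Finset β} (h : (S \ T).card < kOf S T) :
    S.card < T.card := by
  have := Finset.card_sdiff_add_card_inter S T
  unfold kOf at h
  omega

lemma length_padded {S T : Finset β} {k : ℕ} (hk : (S \ T).card ≤ k) :
    (padded S T k).length = k := by
  simp [padded, hk]

lemma mem_padded {S T : Finset β} {k : ℕ} {o : Option β} :
    o ∈ padded S T k ↔ (∃ x ∈ S \ T, some x = o) ∨ (S \ T).card < k ∧ o = none := by
  simp only [padded, List.mem_append, List.mem_map, Finset.mem_toList, List.mem_replicate,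
    Nat.sub_ne_zero_iff_lt]

lemma getD_padded_mem {S T : Finset β} {k : ℕ} (hk : (S \ T).card ≤ k) (i : Fin k) :
    (padded S T k).getD i none ∈ padded S T k := by
  have hi : (i : ℕ) < (padded S T k).length := i.isLt.trans_eq (length_padded hk).symm
  rw [List.getD_eq_getElem _ _ hi]
  exact List.getElem_mem hi

lemma sum_getD_padded {N : Type*} [AddCommMonoid N] {S T : Finset β} {k : ℕ}
    (hk : (S \ T).card ≤ k) (f : Option β → N) :
    ∑ i : Fin k, f ((padded S T k).getD i none) =
      ∑ x ∈ S \ T, f (some x) + (k - (S \ T).card) • f none := by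
  have hofFn : List.ofFn (fun i : Fin k => f ((padded S T k).getD i none)) =
      (padded S T k).map f := by
    refine List.ext_getElem (by simp [length_padded hk]) fun i _ hi => ?_
    rw [List.length_map] at hi
    simp [List.getElem?_eq_getElem hi]
  rw [← List.sum_ofFn, hofFn]
  simp [padded, Function.comp_def]

/-- An element of `T \ S` is opposed to null only when `S` had to be padded, which is where
`hnull` comes in. -/
theorem sum_le_deltaSet {r : β → ℕ} {S T : Finset β} {w : β → ℤ}
    (hnull : S.card < T.card → ∀ v ∈ T \ S, w v ≤ -1)
    (hvote : ∀ x ∈ S \ T, ∀ v ∈ T \ S, w v ≤ vote r (some x) (some v)) :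
    ∑ v ∈ T \ S, w v ≤ deltaSet r S T := by
  have hST : (S \ T).card ≤ kOf S T := card_sdiff_le_kOf S T
  have hTS : (T \ S).card ≤ kOf S T := kOf_comm T S ▸ card_sdiff_le_kOf T S
  have hentry : ∀ o ∈ padded S T (kOf S T), ∀ o' ∈ padded T S (kOf S T),
      o'.elim 0 w ≤ vote r o o' := by
    intro o ho o' ho'
    rcases mem_padded.1 ho' with ⟨v, hv, rfl⟩ | ⟨-, rfl⟩
    · rcases mem_padded.1 ho with ⟨x, hx, rfl⟩ | ⟨hlt, rfl⟩
      · exact hvote x hx v hv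
      · exact hnull (card_lt_card_of_card_sdiff_lt_kOf hlt) v hv
    · exact vote_none_right_nonneg r o
  refine Finset.le_inf' _ _ fun σ _ => ?_
  calc ∑ v ∈ T \ S, w v
      = ∑ j : Fin (kOf S T), ((padded T S (kOf S T)).getD j none).elim 0 w := by
        rw [sum_getD_padded hTS fun o => o.elim 0 w]
        simp
    _ = ∑ i : Fin (kOf S T), ((padded T S (kOf S T)).getD (σ i) none).elim 0 w :=
        (Equiv.sum_comp σ fun j => ((padded T S (kOf S T)).getD j none).elim 0 w).symm
    _ ≤ _ := Finset.sum_le_sum fun i _ =>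
        hentry _ (getD_padded_mem hST i) _ (getD_padded_mem hTS (σ i))

end Padding

section GuaranteedVote

variable {β γ : Type*}

/-- A vertex with rank function `r`, capacity `c` and set of partners `S` welcomes `v` if it has a
free slot or prefers `v` to one of its partners. An edge outside a matching blocks it when its
endpoints welcome each other. -/
def Welcomes (r : β → ℕ) (c : ℕ) (S : Finset β) (v : β) : Prop :=
  S.card < c ∨ ∃ x ∈ S, r v < r x

open Classical in
/-- The vote that `S` is certain to obtain against `v ∉ S` at a vertex with rank function `r` and
capacity `c`, whichever partner in `S`, or null, is opposed to `v`. -/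
noncomputable def guaranteedVote (r : β → ℕ) (c : ℕ) (S : Finset β) (v : β) : ℤ :=
  if Welcomes r c S v then -1 else 1

lemma guaranteedVote_add_nonneg {r : β → ℕ} {r' : γ → ℕ} {c c' : ℕ} {S : Finset β} {S' : Finset γ}
    {v : β} {v' : γ} (h : ¬(Welcomes r c S v ∧ Welcomes r' c' S' v')) :
    0 ≤ guaranteedVote r c S v + guaranteedVote r' c' S' v' := by
  unfold guaranteedVote
  split_ifs with hv hv'
  · exact absurd ⟨hv, hv'⟩ h
  all_goals norm_num

variable [DecidableEq β]

lemma guaranteedVote_le_vote {r : β → ℕ} (c : ℕ) {S : Finset β} {x v : β} (hx : x ∈ S)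
    (hne : r x ≠ r v) : guaranteedVote r c S v ≤ vote r (some x) (some v) := by
  unfold guaranteedVote
  split_ifs with hv
  · exact neg_one_le_vote r _ _
  · have hlt : r x < r v := by
      by_contra hle
      exact hv (Or.inr ⟨x, hx, by omega⟩)
    exact (vote_some_some_of_lt hlt).ge

theorem sum_guaranteedVote_le_deltaSet {r : β → ℕ} {c : ℕ} {S T : Finset β}
    (hr : Set.InjOn r (S ∪ T)) (hT : T.card ≤ c) :
    ∑ v ∈ T \ S, guaranteedVote r c S v ≤ deltaSet r S T := by
  refine sum_le_deltaSet (fun hlt v _ => ?_) (fun x hx v hv => ?_)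
  · have hv : Welcomes r c S v := Or.inl (hlt.trans_le hT)
    rw [guaranteedVote, if_pos hv]
  · rw [Finset.mem_sdiff] at hx hv
    have hne : x ≠ v := ne_of_mem_of_not_mem hx.1 hv.2
    exact guaranteedVote_le_vote c hx.1 (hr.ne (Or.inl hx.1) (Or.inr hv.1) hne)

end GuaranteedVote

namespace PrefInstance

variable {α β : Type*} [DecidableEq α] [DecidableEq β]

lemma mem_rowSet [Fintype β] {M : Finset (α × β)} {a : α} {b : β} : b ∈ rowSet M a ↔ (a, b) ∈ M :=
  Finset.mem_filter_univ b

lemma mem_colSet [Fintype α] {M : Finset (α × β)} {a : α} {b : β} : a ∈ colSet M b ↔ (a, b) ∈ M :=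
  Finset.mem_filter_univ a

variable [Fintype α] [Fintype β]

lemma sum_sdiff_eq_sum_rowSet {N : Type*} [AddCommMonoid N] (S T : Finset (α × β))
    (f : α → β → N) :
    ∑ e ∈ T \ S, f e.1 e.2 = ∑ a, ∑ b ∈ rowSet T a \ rowSet S a, f a b :=
  Finset.sum_finset_product' _ _ _ fun e => by simp [mem_rowSet]

lemma sum_sdiff_eq_sum_colSet {N : Type*} [AddCommMonoid N] (S T : Finset (α × β))
    (f : α → β → N) :
    ∑ e ∈ T \ S, f e.1 e.2 = ∑ b, ∑ a ∈ colSet T b \ colSet S b, f a b :=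
  Finset.sum_finset_product_right' _ _ _ fun e => by simp [mem_colSet]

variable {I : PrefInstance α β} {S T : Finset (α × β)}

lemma injOn_rankA (hS : S ⊆ I.E) (hT : T ⊆ I.E) (a : α) :
    Set.InjOn (I.rankA a) (rowSet S a ∪ rowSet T a) :=
  (I.rankA_injOn a).mono <| Set.union_subset (fun _ hb => hS (mem_rowSet.1 hb))
    fun _ hb => hT (mem_rowSet.1 hb)

lemma injOn_rankB (hS : S ⊆ I.E) (hT : T ⊆ I.E) (b : β) :
    Set.InjOn (I.rankB b) (colSet S b ∪ colSet T b) :=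
  (I.rankB_injOn b).mono <| Set.union_subset (fun _ ha => hS (mem_colSet.1 ha))
    fun _ ha => hT (mem_colSet.1 ha)

lemma sum_guaranteedVote_le_sum_DeltaA (hS : S ⊆ I.E) (hT : I.IsMatching T) :
    ∑ e ∈ T \ S, guaranteedVote (I.rankA e.1) (I.capA e.1) (rowSet S e.1) e.2 ≤
      ∑ a, I.DeltaA S T a := by
  rw [sum_sdiff_eq_sum_rowSet S T fun a => guaranteedVote (I.rankA a) (I.capA a) (rowSet S a)]
  exact Finset.sum_le_sum fun a _ =>
    sum_guaranteedVote_le_deltaSet (injOn_rankA hS hT.1 a) (hT.2.1 a)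

lemma sum_guaranteedVote_le_sum_DeltaB (hS : S ⊆ I.E) (hT : I.IsMatching T) :
    ∑ e ∈ T \ S, guaranteedVote (I.rankB e.2) (I.capB e.2) (colSet S e.2) e.1 ≤
      ∑ b, I.DeltaB S T b := by
  rw [sum_sdiff_eq_sum_colSet S T fun a b => guaranteedVote (I.rankB b) (I.capB b) (colSet S b) a]
  exact Finset.sum_le_sum fun b _ =>
    sum_guaranteedVote_le_deltaSet (injOn_rankB hS hT.1 b) (hT.2.2 b)

lemma Stable.not_welcomes (hS : I.Stable S) {e : α × β} (he : e ∈ I.E) (heS : e ∉ S) :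
    ¬(Welcomes (I.rankA e.1) (I.capA e.1) (rowSet S e.1) e.2 ∧
      Welcomes (I.rankB e.2) (I.capB e.2) (colSet S e.2) e.1) :=
  fun h => hS.2 e.1 e.2 ⟨he, heS, h⟩

end PrefInstance

/-- Every pairwise-stable matching in `G` is a popular matching in `G`. -/
theorem statement5 {α β : Type*} [Fintype α] [Fintype β] [DecidableEq α] [DecidableEq β]
    (I : PrefInstance α β) (S : Finset (α × β)) (hS : I.Stable S) :
    I.Popular S := by
  refine ⟨hS.1, fun T hT => ?_⟩
  let voteA (e : α × β) : ℤ :=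
    guaranteedVote (I.rankA e.1) (I.capA e.1) (PrefInstance.rowSet S e.1) e.2
  let voteB (e : α × β) : ℤ :=
    guaranteedVote (I.rankB e.2) (I.capB e.2) (PrefInstance.colSet S e.2) e.1
  have hedge : ∀ e ∈ T \ S, 0 ≤ voteA e + voteB e := fun e he =>
    have ⟨heT, heS⟩ := Finset.mem_sdiff.1 he
    guaranteedVote_add_nonneg (hS.not_welcomes (hT.1 heT) heS)
  calc 0 ≤ ∑ e ∈ T \ S, (voteA e + voteB e) := Finset.sum_nonneg hedge
    _ = ∑ e ∈ T \ S, voteA e + ∑ e ∈ T \ S, voteB e := Finset.sum_add_distrib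
    _ ≤ I.Delta S T := add_le_add
        (PrefInstance.sum_guaranteedVote_le_sum_DeltaA hS.1.1 hT)
        (PrefInstance.sum_guaranteedVote_le_sum_DeltaB hS.1.1 hT)
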